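/- Let A, B be nonzero real numbers, α, β ∈ ℝ, and let p, q be nonzero integers with A·q = B·p. Then (1/T)·∫₀ᵀ Φ(A·t − α, B·t − β) dt → ∫₀¹ Φ(p·s − α, q·s − β) ds as T → ∞, where Φ(u,v) = sgn(cos(2πu)·cos(2πv)); that is, the long-time average of Φ along the ray t ↦ (At − α, Bt − β) equals the average of the 1-periodic function s ↦ Φ(ps − α, qs − β) over one period. -/

import Mathlib

open Filter Real MeasureTheory

noncomputable def sgn (t : ℝ) : ℝ := if 0 < t then 1 else if t < 0 then -1 else 0

noncomputable def Φ (u v : ℝ) : ℝ := sgn (Real.cos (2 * π * u) * Real.cos (2 * π * v))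

/-!
The ray `t ↦ (A t - α, B t - β)` is the curve `s ↦ (p s - α, q s - β)`, closed modulo `ℤ²`, run at
speed `A / p`, so only averages of a periodic function `f` of one variable matter. The primitive of
`f` minus the linear function with slope the mean of `f` is continuous and periodic, hence bounded,
and tends to zero after division by the length of the interval.
-/

section PeriodicAverage

open Bornology Function Topology

variable {E : Type*} [NormedAddCommGroup E] [NormedSpace ℝ E] {f : ℝ → E} {τ : ℝ}

lemma periodic_integral_sub_smul_average (hf : Periodic f τ) (hτ : τ ≠ 0)
    (hint : IntervalIntegrable f volume 0 τ) :
    Periodic (fun x => (∫ t in (0 : ℝ)..x, f t) - x • τ⁻¹ • ∫ t in (0 : ℝ)..τ, f t) τ := fun x => by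
  have hprimitive : ∫ t in (0 : ℝ)..x + τ, f t
      = (∫ t in (0 : ℝ)..x, f t) + ∫ t in (0 : ℝ)..τ, f t := by
    simpa only [zero_add] using
      hf.intervalIntegral_add_eq_add 0 x (hf.intervalIntegrable₀ hτ hint)
  simp only [hprimitive, add_smul, smul_inv_smul₀ hτ]
  abel

lemma exists_norm_integral_sub_smul_average_le (hf : Periodic f τ) (hτ : τ ≠ 0)
    (hint : IntervalIntegrable f volume 0 τ) :
    ∃ C, ∀ x, ‖(∫ t in (0 : ℝ)..x, f t) - x • τ⁻¹ • ∫ t in (0 : ℝ)..τ, f t‖ ≤ C := by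
  have hcont : Continuous fun x => (∫ t in (0 : ℝ)..x, f t) - x • τ⁻¹ • ∫ t in (0 : ℝ)..τ, f t :=
    (intervalIntegral.continuous_primitive (hf.intervalIntegrable₀ hτ hint) 0).sub (by fun_prop)
  have hbdd := (periodic_integral_sub_smul_average hf hτ hint).isBounded_of_continuous hτ hcont
  simpa only [Set.forall_mem_range] using hbdd.exists_norm_le

lemma tendsto_average_of_periodic (hf : Periodic f τ) (hτ : τ ≠ 0)
    (hint : IntervalIntegrable f volume 0 τ) :
    Tendsto (fun x : ℝ => x⁻¹ • ∫ t in (0 : ℝ)..x, f t) (cobounded ℝ)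
      (𝓝 (τ⁻¹ • ∫ t in (0 : ℝ)..τ, f t)) := by
  obtain ⟨C, hC⟩ := exists_norm_integral_sub_smul_average_le hf hτ hint
  have herror := tendsto_inv₀_cobounded.zero_smul_isBoundedUnder_le
    (isBoundedUnder_of ⟨C, hC⟩ : IsBoundedUnder (· ≤ ·) (cobounded ℝ) _)
  refine tendsto_sub_nhds_zero_iff.1 (herror.congr' ?_)
  filter_upwards [eventually_ne_cobounded 0] with x hx
  rw [smul_sub, inv_smul_smul₀ hx]

lemma tendsto_average_comp_mul_left_of_periodic (hf : Periodic f τ) (hτ : τ ≠ 0)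
    (hint : IntervalIntegrable f volume 0 τ) {c : ℝ} (hc : c ≠ 0) :
    Tendsto (fun x : ℝ => x⁻¹ • ∫ t in (0 : ℝ)..x, f (c * t)) (cobounded ℝ)
      (𝓝 (τ⁻¹ • ∫ t in (0 : ℝ)..τ, f t)) := by
  refine ((tendsto_average_of_periodic hf hτ hint).comp (tendsto_mul_left_cobounded hc)).congr
    fun x => ?_
  rw [comp_apply, intervalIntegral.integral_comp_mul_left f hc, mul_zero, smul_smul, mul_inv_rev]

theorem time_average_eq_period_average_general {F : ℝ → ℝ → E}
    (hF : ∀ (u v : ℝ) (m n : ℤ), F (u + m) (v + n) = F u v)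
    {A B : ℝ} (hA : A ≠ 0) (α β : ℝ) {p q : ℤ} (hp : p ≠ 0) (hpq : A * (q : ℝ) = B * (p : ℝ))
    (hint : IntervalIntegrable (fun s => F (p * s - α) (q * s - β)) volume 0 1) :
    Tendsto (fun T : ℝ => (1 / T) • ∫ t in (0 : ℝ)..T, F (A * t - α) (B * t - β))
      atTop (𝓝 (∫ s in (0 : ℝ)..1, F (p * s - α) (q * s - β))) := by
  have hp' : (p : ℝ) ≠ 0 := Int.cast_ne_zero.2 hp
  have hper : Periodic (fun s : ℝ => F (p * s - α) (q * s - β)) 1 := fun s => by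
    simp only [mul_add, mul_one, add_sub_right_comm, hF]
  have hfst (t : ℝ) : p * (A / p * t) = A * t := by field_simp
  have hsnd (t : ℝ) : q * (A / p * t) = B * t := by
    field_simp
    linear_combination t * hpq
  have hlim := tendsto_average_comp_mul_left_of_periodic hper one_ne_zero hint (div_ne_zero hA hp')
  simp only [hfst, hsnd, inv_one, one_smul] at hlim
  simpa only [one_div] using hlim.mono_left IsOrderBornology.atTop_le_cobounded

end PeriodicAverage

lemma measurable_sgn : Measurable sgn :=
  Measurable.ite measurableSet_Ioi measurable_const
    (Measurable.ite measurableSet_Iio measurable_const measurable_const)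

lemma norm_sgn_le_one (t : ℝ) : ‖sgn t‖ ≤ 1 := by
  unfold sgn
  split_ifs <;> simp

lemma Φ_add_int (u v : ℝ) (m n : ℤ) : Φ (u + m) (v + n) = Φ u v := by
  have cos_add_int (w : ℝ) (k : ℤ) : Real.cos (2 * π * (w + k)) = Real.cos (2 * π * w) := by
    rw [mul_add, mul_comm (2 * π) (k : ℝ), Real.cos_add_int_mul_two_pi]
  simp only [Φ, cos_add_int]

lemma intervalIntegrable_Φ_comp {μ : Measure ℝ} [IsLocallyFiniteMeasure μ] {u v : ℝ → ℝ}
    (hu : Measurable u) (hv : Measurable v) (a b : ℝ) :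
    IntervalIntegrable (fun t => Φ (u t) (v t)) μ a b := by
  have hmeas : Measurable fun t => Φ (u t) (v t) := measurable_sgn.comp (by fun_prop)
  refine (intervalIntegrable_const (c := (1 : ℝ))).mono_fun hmeas.aestronglyMeasurable
    (.of_forall fun t => ?_)
  rw [norm_one]
  exact norm_sgn_le_one _

theorem time_average_eq_period_average
    (A B : ℝ) (hA : A ≠ 0) (hB : B ≠ 0) (α β : ℝ)
    (p q : ℤ) (hp : p ≠ 0) (hq : q ≠ 0) (hpq : A * (q : ℝ) = B * (p : ℝ)) :
    Tendsto (fun T : ℝ => (1 / T) * ∫ t in (0:ℝ)..T, Φ (A * t - α) (B * t - β))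
      atTop (nhds (∫ s in (0:ℝ)..1, Φ ((p : ℝ) * s - α) ((q : ℝ) * s - β))) :=
  time_average_eq_period_average_general Φ_add_int hA α β hp hpq
    (intervalIntegrable_Φ_comp (by fun_prop) (by fun_prop) 0 1)
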